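/- Asymptotic tail comparison from maximal-rearrangement domination (Proposition on limsup): Let ξ and η be nonnegative integrable random variables such that ξ**(t) ≤ K·η**(t) for all t ∈ (0,1], for some constant K > 0. Let W : [0,∞) → [0,∞) be an increasing function for which there exist constants p > 1 and c > 0 with W(s·t) ≤ c·s^p·W(t) for all 0 < s < 1 and all t > 0. Then there is a constant C, depending only on p, c and K, such that limsup_{t→∞} W(t)·P(ξ ≥ t) ≤ limsup_{t→∞} W(t)·P(η ≥ C·t). -/

import Mathlib

open MeasureTheory ENNReal Filter

/-- The decreasing rearrangement `ξ*(t) = inf { s ≥ 0 : P(|ξ| > s) ≤ t }`. -/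
noncomputable def decRearr {Ω : Type*} [MeasureSpace Ω] (ξ : Ω → ℝ) (t : ℝ) : ℝ :=
  sInf {s : ℝ | 0 ≤ s ∧ volume {ω | s < |ξ ω|} ≤ ENNReal.ofReal t}

/-- The maximal function `ξ**(t) = (1/t)·∫₀^t ξ*(u) du`. -/
noncomputable def maxRearr {Ω : Type*} [MeasureSpace Ω] (ξ : Ω → ℝ) (t : ℝ) : ℝ :=
  (1 / t) * ∫ u in (0 : ℝ)..t, decRearr ξ u

theorem decRearr_nonneg' {Ω : Type*} [MeasureSpace Ω] (ξ : Ω → ℝ) (t : ℝ) : 0 ≤ decRearr ξ t :=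
  Real.sInf_nonneg (fun _ hs => hs.1)

theorem decRearr_set_nonempty {Ω : Type*} [MeasureSpace Ω] (ξ : Ω → ℝ)
    (hξ : Integrable ξ volume) {t : ℝ} (ht : 0 < t) :
    {s : ℝ | 0 ≤ s ∧ volume {ω | s < |ξ ω|} ≤ ENNReal.ofReal t}.Nonempty := by
  have hI : 0 ≤ ∫ ω, |ξ ω| := integral_nonneg (fun _ => abs_nonneg _)
  set s : ℝ := (∫ ω, |ξ ω|) / t + 1 with hs
  have hspos : 0 < s := by positivity
  refine ⟨s, hspos.le, ?_⟩
  have hM := meas_ge_le_lintegral_div (μ := (volume : Measure Ω))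
    (f := fun ω => ENNReal.ofReal |ξ ω|) (hξ.abs.aemeasurable.ennreal_ofReal)
    (ε := ENNReal.ofReal s) (by simpa using hspos) ENNReal.ofReal_ne_top
  have hsub : {ω | s < |ξ ω|} ⊆ {ω | ENNReal.ofReal s ≤ ENNReal.ofReal |ξ ω|} := by
    intro ω hω
    exact ENNReal.ofReal_le_ofReal (le_of_lt hω)
  refine (measure_mono hsub).trans (hM.trans ?_)
  rw [← ofReal_integral_eq_lintegral_ofReal hξ.abs (ae_of_all _ (fun _ => abs_nonneg _)),
    ← ENNReal.ofReal_div_of_pos hspos]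
  apply ENNReal.ofReal_le_ofReal
  rw [div_le_iff₀ hspos, hs, mul_add, mul_div_cancel₀ _ ht.ne']
  linarith

theorem decRearr_antitoneOn {Ω : Type*} [MeasureSpace Ω] (ξ : Ω → ℝ)
    (hξ : Integrable ξ volume) : AntitoneOn (decRearr ξ) (Set.Ioi 0) := by
  intro x hx y _ hxy
  refine csInf_le_csInf ⟨0, fun _ hs => hs.1⟩ (decRearr_set_nonempty ξ hξ hx) ?_
  intro s hs
  exact ⟨hs.1, hs.2.trans (ENNReal.ofReal_le_ofReal hxy)⟩

theorem decRearr_aemeasurable {Ω : Type*} [MeasureSpace Ω] (ξ : Ω → ℝ)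
    (hξ : Integrable ξ volume) (a : ℝ) :
    AEMeasurable (decRearr ξ) (volume.restrict (Set.Ioc 0 a)) :=
  aemeasurable_restrict_of_antitoneOn measurableSet_Ioc
    ((decRearr_antitoneOn ξ hξ).mono (fun _ h => h.1))

theorem lintegral_decRearr_le {Ω : Type*} [MeasureSpace Ω]
    [IsProbabilityMeasure (volume : Measure Ω)] (ξ : Ω → ℝ)
    (hξ : Integrable ξ volume) (a : ℝ) :
    ∫⁻ u in Set.Ioc 0 a, ENNReal.ofReal (decRearr ξ u) ≤
      ∫⁻ v in Set.Ioi (0 : ℝ), min (ENNReal.ofReal a) (volume {ω | v < |ξ ω|}) := by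
  rw [lintegral_eq_lintegral_meas_lt _ (ae_of_all _ (fun u => decRearr_nonneg' ξ u))
    (decRearr_aemeasurable ξ hξ a)]
  refine setLIntegral_mono' measurableSet_Ioi ?_
  intro v hv
  refine le_min ?_ ?_
  · refine (measure_mono (Set.subset_univ _)).trans ?_
    simp
  · rw [Measure.restrict_apply' measurableSet_Ioc]
    have hsub : {u | v < decRearr ξ u} ∩ Set.Ioc 0 a ⊆
        Set.Ioc 0 (volume {ω | v < |ξ ω|}).toReal := by
      rintro u ⟨h1, h2⟩
      refine ⟨h2.1, ?_⟩
      by_contra h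
      have h1' : v < decRearr ξ u := h1
      have : decRearr ξ u ≤ v := csInf_le ⟨0, fun _ hs => hs.1⟩
        ⟨le_of_lt hv, by
          rw [← ENNReal.ofReal_toReal (measure_ne_top volume {ω | v < |ξ ω|})]
          exact ENNReal.ofReal_le_ofReal (not_le.mp h).le⟩
      linarith
    refine (measure_mono hsub).trans ?_
    rw [Real.volume_Ioc, sub_zero, ENNReal.ofReal_toReal (measure_ne_top _ _)]

theorem decRearr_integrableOn {Ω : Type*} [MeasureSpace Ω]
    [IsProbabilityMeasure (volume : Measure Ω)] (ξ : Ω → ℝ)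
    (hξ : Integrable ξ volume) (a : ℝ) : IntegrableOn (decRearr ξ) (Set.Ioc 0 a) := by
  refine (lintegral_ofReal_ne_top_iff_integrable
    (decRearr_aemeasurable ξ hξ a).aestronglyMeasurable
    (ae_of_all _ (fun u => decRearr_nonneg' ξ u))).mp ?_
  refine ne_top_of_le_ne_top ?_ ((lintegral_decRearr_le ξ hξ a).trans
    (lintegral_mono (fun v => min_le_right _ _)))
  rw [← lintegral_eq_lintegral_meas_lt _ (ae_of_all _ (fun u => abs_nonneg _))
    hξ.abs.aemeasurable]
  exact (lintegral_ofReal_ne_top_iff_integrable hξ.abs.aestronglyMeasurable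
    (ae_of_all _ (fun u => abs_nonneg _))).mpr hξ.abs

theorem mul_le_integral_decRearr {Ω : Type*} [MeasureSpace Ω]
    [IsProbabilityMeasure (volume : Measure Ω)] (ξ : Ω → ℝ) (hξ : Integrable ξ volume) (t : ℝ) :
    (volume {ω | t ≤ ξ ω}).toReal * t ≤
      ∫ u in (0 : ℝ)..(volume {ω | t ≤ ξ ω}).toReal, decRearr ξ u := by
  set a := (volume {ω | t ≤ ξ ω}).toReal with ha
  have ha0 : 0 ≤ a := ENNReal.toReal_nonneg
  have h : ∫ u in (0 : ℝ)..a, t ≤ ∫ u in (0 : ℝ)..a, decRearr ξ u := by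
    refine intervalIntegral.integral_mono_on_of_le_Ioo ha0 (by simp) ?_ ?_
    · exact (intervalIntegrable_iff_integrableOn_Ioc_of_le ha0).mpr (decRearr_integrableOn ξ hξ a)
    · intro u hu
      refine le_csInf (decRearr_set_nonempty ξ hξ hu.1) ?_
      intro s hs
      by_contra hlt
      have h1 : volume {ω | t ≤ ξ ω} ≤ ENNReal.ofReal u := by
        refine (measure_mono ?_).trans hs.2
        intro ω hω
        exact lt_of_lt_of_le (not_le.mp hlt) (le_trans hω (le_abs_self _))
      have h2 := ENNReal.toReal_le_of_le_ofReal hu.1.le h1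
      exact absurd hu.2 (not_lt.mpr h2)
  simpa using h

theorem integral_decRearr_le {Ω : Type*} [MeasureSpace Ω]
    [IsProbabilityMeasure (volume : Measure Ω)] (η : Ω → ℝ) (hη : Integrable η volume)
    (hη0 : ∀ ω, 0 ≤ η ω) (a s p D : ℝ) (ha : 0 ≤ a) (hs : 0 < s) (hp : 1 < p) (hD : 0 ≤ D)
    (hq : ∀ v, s < v → (volume {ω | v ≤ η ω}).toReal ≤ D * v ^ (-p)) :
    ∫ u in (0 : ℝ)..a, decRearr η u ≤ a * s + D * (s ^ (1 - p) / (p - 1)) := by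
  have hR : 0 ≤ s ^ (1 - p) / (p - 1) :=
    div_nonneg (Real.rpow_nonneg hs.le _) (by linarith)
  rw [intervalIntegral.integral_of_le ha,
    integral_eq_lintegral_of_nonneg_ae (ae_of_all _ (fun u => decRearr_nonneg' η u))
      (decRearr_aemeasurable η hη a).aestronglyMeasurable]
  refine ENNReal.toReal_le_of_le_ofReal (by positivity) ?_
  refine (lintegral_decRearr_le η hη a).trans ?_
  rw [← Set.Ioc_union_Ioi_eq_Ioi hs.le]
  refine (lintegral_union_le _ _ _).trans ?_
  rw [ENNReal.ofReal_add (by positivity) (by positivity)]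
  refine add_le_add ?_ ?_
  · refine (lintegral_mono (fun v => min_le_left _ _)).trans ?_
    rw [setLIntegral_const, Real.volume_Ioc, sub_zero, ENNReal.ofReal_mul ha]
  · have hint : IntegrableOn (fun v : ℝ => D * v ^ (-p)) (Set.Ioi s) :=
      (integrableOn_Ioi_rpow_of_lt (by linarith) hs).const_mul D
    have hval : ∫ v in Set.Ioi s, D * v ^ (-p) = D * (s ^ (1 - p) / (p - 1)) := by
      rw [integral_const_mul, integral_Ioi_rpow_of_lt (by linarith) hs]
      have : -p + 1 = -(p - 1) := by ring
      rw [this, div_neg, neg_div, neg_neg, neg_sub]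
    rw [← hval, ofReal_integral_eq_lintegral_ofReal hint]
    · refine setLIntegral_mono' measurableSet_Ioi ?_
      intro v hv
      refine (min_le_right _ _).trans ?_
      have hle : volume {ω | v < |η ω|} ≤ volume {ω | v ≤ η ω} := by
        refine measure_mono ?_
        intro ω hω
        have h : v < |η ω| := hω
        rw [abs_of_nonneg (hη0 ω)] at h
        exact h.le
      refine hle.trans ?_
      rw [← ENNReal.ofReal_toReal (measure_ne_top volume {ω | v ≤ η ω})]
      exact ENNReal.ofReal_le_ofReal (hq v hv)
    · refine (ae_restrict_iff' measurableSet_Ioi).mpr (ae_of_all _ ?_)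
      intro v hv
      have : 0 < v := hs.trans hv
      simp only [Pi.zero_apply]
      positivity

/-- Asymptotic tail comparison from maximal-rearrangement domination: if `ξ** ≤ K·η**` and
`W` is increasing with `W(st) ≤ c·s^p·W(t)` for `0 < s < 1`, then
`limsup_{t→∞} W(t)·P(ξ ≥ t) ≤ limsup_{t→∞} W(t)·P(η ≥ C·t)` for a constant `C` depending
only on `p`, `c` and `K`. -/
theorem limsup_tail_comparison (p c K : ℝ) (hp : 1 < p) (hc : 0 < c) (hK : 0 < K) :
    ∃ C : ℝ, 0 < C ∧
      ∀ (Ω : Type) [MeasureSpace Ω], IsProbabilityMeasure (volume : Measure Ω) →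
      ∀ (ξ η : Ω → ℝ),
        (∀ ω, 0 ≤ ξ ω) → (∀ ω, 0 ≤ η ω) →
        Integrable ξ volume → Integrable η volume →
        (∀ t ∈ Set.Ioc (0 : ℝ) 1, maxRearr ξ t ≤ K * maxRearr η t) →
      ∀ (W : ℝ → ℝ),
        MonotoneOn W (Set.Ici (0 : ℝ)) →
        (∀ x : ℝ, 0 ≤ x → 0 ≤ W x) →
        (∀ s t : ℝ, 0 < s → s < 1 → 0 < t → W (s * t) ≤ c * s ^ p * W t) →
        Filter.limsup (fun t : ℝ => ENNReal.ofReal (W t) * volume {ω | t ≤ ξ ω}) atTop ≤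
          Filter.limsup (fun t : ℝ => ENNReal.ofReal (W t) * volume {ω | C * t ≤ η ω})
            atTop := by
  obtain ⟨x, hx0, hx1, hxc⟩ : ∃ x : ℝ, 0 < x ∧ x < 1 ∧ c * x ^ p ≤ p - 1 := by
    have hpos : 0 < (p - 1) / c := div_pos (by linarith) hc
    have hx0 : 0 < min (1 / 2) ((p - 1) / c) := lt_min (by norm_num) hpos
    have hx1 : min (1 / 2) ((p - 1) / c) < 1 := (min_le_left _ _).trans_lt (by norm_num)
    refine ⟨min (1 / 2) ((p - 1) / c), hx0, hx1, ?_⟩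
    have h1 := Real.rpow_le_rpow_of_exponent_ge hx0 hx1.le hp.le
    rw [Real.rpow_one] at h1
    have h2 := h1.trans (min_le_right _ _)
    rw [le_div_iff₀ hc] at h2
    linarith
  refine ⟨x / (2 * K), by positivity, ?_⟩
  intro Ω _ hprob ξ η hξ0 hη0 hξ hη hdom W hWm hW0 hW
  refine le_of_forall_gt_imp_ge_of_dense ?_
  intro L hL
  rcases eq_or_ne L ⊤ with rfl | hLtop
  · exact le_top
  have hev := eventually_lt_of_limsup_lt hL
  obtain ⟨t0, ht0⟩ := eventually_atTop.mp hev
  refine limsup_le_of_le (by isBoundedDefault) ?_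
  filter_upwards [eventually_ge_atTop t0, eventually_gt_atTop (0 : ℝ)] with t htt ht
  set a := (volume {ω | t ≤ ξ ω}).toReal with ha
  have ha0 : 0 ≤ a := ENNReal.toReal_nonneg
  have ha1 : a ≤ 1 := by
    have := ENNReal.toReal_mono ENNReal.one_ne_top (prob_le_one (μ := volume) (s := {ω | t ≤ ξ ω}))
    simpa using this
  rw [← ENNReal.ofReal_toReal (measure_ne_top volume {ω | t ≤ ξ ω}), ← ha,
    ← ENNReal.ofReal_mul (hW0 t ht.le)]
  rw [← ENNReal.ofReal_toReal hLtop]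
  apply ENNReal.ofReal_le_ofReal
  set l := L.toReal with hl
  have hl0 : 0 ≤ l := ENNReal.toReal_nonneg
  rcases (hW0 t ht.le).eq_or_lt with hWt | hWt
  · rw [← hWt, zero_mul]; exact hl0
  rcases ha0.eq_or_lt with haz | hapos
  · rw [← haz, mul_zero]; exact hl0
  set s := t / (2 * K) with hs
  have hs0 : 0 < s := by positivity
  have hCt : x / (2 * K) * t = x * s := by rw [hs]; ring
  have hts : t = 2 * K * s := by rw [hs]; field_simp
  set D := c * l * (x * s) ^ p / W t with hD
  have hD0 : 0 ≤ D := by positivity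
  have hq : ∀ v, s < v → (volume {ω | v ≤ η ω}).toReal ≤ D * v ^ (-p) := by
    intro v hv
    have hv0 : 0 < v := hs0.trans hv
    have hr0 : 0 < x * s / v := by positivity
    have hr1 : x * s / v < 1 := by
      rw [div_lt_one hv0]; nlinarith
    have hτ : 0 < t / (x * s / v) := by positivity
    have hτt : t ≤ t / (x * s / v) := by
      rw [le_div_iff₀ hr0]; nlinarith
    have h1 := hW _ _ hr0 hr1 hτ
    rw [mul_div_cancel₀ _ hr0.ne'] at h1
    have h2 := ht0 _ (htt.trans hτt)
    have h3 : x / (2 * K) * (t / (x * s / v)) = v := by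
      rw [← mul_div_assoc, hCt]; field_simp
    rw [h3] at h2
    have h4 := ENNReal.toReal_mono hLtop h2.le
    rw [ENNReal.toReal_mul, ENNReal.toReal_ofReal (hW0 _ hτ.le)] at h4
    have hq0 : 0 ≤ (volume {ω | v ≤ η ω}).toReal := ENNReal.toReal_nonneg
    have h5 : D * v ^ (-p) = c * (x * s / v) ^ p * l / W t := by
      rw [hD, Real.div_rpow (by positivity) hv0.le, Real.rpow_neg hv0.le]; ring
    rw [h5, le_div_iff₀ hWt]
    have hc0 : 0 ≤ c * (x * s / v) ^ p := by positivity
    calc _ ≤ (volume {ω | v ≤ η ω}).toReal * (c * (x * s / v) ^ p * W (t / (x * s / v))) :=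
          mul_le_mul_of_nonneg_left h1 hq0
      _ = c * (x * s / v) ^ p * (W (t / (x * s / v)) * (volume {ω | v ≤ η ω}).toReal) := by ring
      _ ≤ _ := mul_le_mul_of_nonneg_left h4 hc0
  have hup := integral_decRearr_le η hη hη0 a s p D ha0 hs0 hp hD0 hq
  have hlow := mul_le_integral_decRearr ξ hξ t
  rw [← ha] at hlow
  have hd := hdom a ⟨hapos, ha1⟩
  unfold maxRearr at hd
  have hd2 : ∫ u in (0 : ℝ)..a, decRearr ξ u ≤ K * ∫ u in (0 : ℝ)..a, decRearr η u := by
    have := mul_le_mul_of_nonneg_left hd ha0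
    field_simp at this
    exact this
  have hfin : a * t ≤ K * (a * s + D * (s ^ (1 - p) / (p - 1))) :=
    hlow.trans (hd2.trans (mul_le_mul_of_nonneg_left hup hK.le))
  have hp1 : 0 < p - 1 := by linarith
  have hE : D * (s ^ (1 - p) / (p - 1)) = (c * x ^ p / (p - 1)) * l * s / W t := by
    rw [hD, Real.mul_rpow hx0.le hs0.le, Real.rpow_sub hs0, Real.rpow_one]
    have : 0 < s ^ p := Real.rpow_pos_of_pos hs0 p
    field_simp
  rw [hE] at hfin
  have hat : a * t = 2 * (a * (K * s)) := by
    calc a * t = a * (2 * K * s) := congrArg (fun z => a * z) hts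
      _ = _ := by ring
  rw [hat] at hfin
  have h6 : a * (K * s) ≤ (K * s) * ((c * x ^ p / (p - 1)) * l / W t) := by
    have : K * (a * s + c * x ^ p / (p - 1) * l * s / W t) =
      a * (K * s) + (K * s) * ((c * x ^ p / (p - 1)) * l / W t) := by ring
    rw [this] at hfin
    linarith
  have h7 : a ≤ (c * x ^ p / (p - 1)) * l / W t := by
    rw [mul_comm] at h6
    exact le_of_mul_le_mul_left h6 (by positivity)
  rw [le_div_iff₀ hWt] at h7
  have h8 : c * x ^ p / (p - 1) ≤ 1 := (div_le_one hp1).mpr hxc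
  have h9 := mul_le_mul_of_nonneg_right h8 hl0
  linarith
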